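/- arXiv:2406.08962 — 4 statements merged into one kernel-verified Lean document; each statement's English description precedes it below -/
import Mathlib

section
/- Let M be a bounded linear operator on 𝓗 and define f : 𝓗 → 𝓗 by f(ψ) = (⟨ψ, Mψ⟩ / ⟨ψ, ψ⟩) ψ for ψ ≠ 0 and f(0) = 0. Then f is globally Lipschitz with Lipschitz constant 5‖M‖, i.e. ‖f(ψ) − f(φ)‖ ≤ 5‖M‖ ‖ψ − φ‖ for all ψ, φ ∈ 𝓗. -/
open scoped InnerProductSpace

/-!
Let `P_ψ` be the orthogonal projection onto the line spanned by `ψ`. Then `f ψ = P_ψ (M ψ)`, also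
at `ψ = 0`, and `f ψ - f φ = P_ψ (M ψ - M φ) + (P_ψ - P_φ) (M φ)`. The first term has norm at most
`‖M‖ ‖ψ - φ‖`. The operator norm of `P_ψ - P_φ` is the sine of the angle between the two lines, and
`‖φ‖` times this sine is the distance from `φ` to the line of `ψ`, hence at most `‖ψ - φ‖`; so the
second term is also at most `‖M‖ ‖ψ - φ‖`. This gives the constant `2 ‖M‖`.
-/

section Projections

variable {𝕜 E : Type*} [RCLike 𝕜] [NormedAddCommGroup E] [InnerProductSpace 𝕜 E]

theorem norm_sq_starProjection_sub_starProjection (U V : Submodule 𝕜 E)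
    [U.HasOrthogonalProjection] [V.HasOrthogonalProjection] (z : E) :
    ‖U.starProjection z - V.starProjection z‖ ^ 2 =
      ‖U.starProjection (Vᗮ.starProjection z)‖ ^ 2 +
        ‖Uᗮ.starProjection (V.starProjection z)‖ ^ 2 := by
  have component_U : U.starProjection (U.starProjection z - V.starProjection z) =
      U.starProjection (Vᗮ.starProjection z) := by
    rw [V.starProjection_orthogonal_val, map_sub, map_sub,
      Submodule.starProjection_eq_self_iff.2 (U.starProjection_apply_mem z)]
  have component_orthogonal : Uᗮ.starProjection (U.starProjection z - V.starProjection z) =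
      -Uᗮ.starProjection (V.starProjection z) := by
    rw [map_sub, Submodule.starProjection_orthogonal_apply_eq_zero (U.starProjection_apply_mem z),
      zero_sub]
  rw [Submodule.norm_sq_eq_add_norm_sq_starProjection _ U, component_U, component_orthogonal,
    norm_neg]

theorem norm_mul_norm_starProjection_span_singleton (x w : E) :
    ‖x‖ * ‖(𝕜 ∙ x).starProjection w‖ = ‖⟪x, w⟫_𝕜‖ := by
  rcases eq_or_ne x 0 with rfl | hx
  · simp
  · have hx' : ‖x‖ ≠ 0 := norm_ne_zero_iff.2 hx
    rw [Submodule.starProjection_singleton, norm_smul, norm_div, RCLike.norm_ofReal,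
      abs_of_nonneg (by positivity)]
    field_simp

theorem norm_mul_norm_starProjection_orthogonal_span_singleton_comm (x y : E) :
    ‖y‖ * ‖(𝕜 ∙ y)ᗮ.starProjection x‖ = ‖x‖ * ‖(𝕜 ∙ x)ᗮ.starProjection y‖ := by
  have sq_eq (x y : E) : (‖y‖ * ‖(𝕜 ∙ y)ᗮ.starProjection x‖) ^ 2 =
      ‖y‖ ^ 2 * ‖x‖ ^ 2 - ‖⟪y, x⟫_𝕜‖ ^ 2 := by
    rw [← norm_mul_norm_starProjection_span_singleton,
      Submodule.norm_sq_eq_add_norm_sq_starProjection x (𝕜 ∙ y)]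
    ring
  rw [← sq_eq_sq₀ (by positivity) (by positivity), sq_eq, sq_eq, norm_inner_symm]
  ring

theorem norm_starProjection_orthogonal_span_singleton_le (x y : E) :
    ‖(𝕜 ∙ x)ᗮ.starProjection y‖ ≤ ‖x - y‖ := by
  have vanish : (𝕜 ∙ x)ᗮ.starProjection x = 0 :=
    Submodule.starProjection_orthogonalComplement_singleton_eq_zero x
  calc ‖(𝕜 ∙ x)ᗮ.starProjection y‖ = ‖(𝕜 ∙ x)ᗮ.starProjection (x - y)‖ := by
        rw [map_sub, vanish, zero_sub, norm_neg]
    _ ≤ ‖x - y‖ := Submodule.norm_starProjection_apply_le _ _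

theorem norm_mul_norm_starProjection_orthogonal_span_singleton_le_of_mem (x : E) {y w : E}
    (hw : w ∈ 𝕜 ∙ y) :
    ‖y‖ * ‖(𝕜 ∙ x)ᗮ.starProjection w‖ ≤ ‖x - y‖ * ‖w‖ := by
  obtain ⟨c, rfl⟩ := Submodule.mem_span_singleton.1 hw
  rw [map_smul, norm_smul, norm_smul]
  calc ‖y‖ * (‖c‖ * ‖(𝕜 ∙ x)ᗮ.starProjection y‖) ≤ ‖y‖ * (‖c‖ * ‖x - y‖) := by
        gcongr
        exact norm_starProjection_orthogonal_span_singleton_le x y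
    _ = ‖x - y‖ * (‖c‖ * ‖y‖) := by ring

theorem norm_mul_norm_starProjection_span_singleton_le_of_mem_orthogonal (x : E) {y w : E}
    (hw : w ∈ (𝕜 ∙ y)ᗮ) :
    ‖y‖ * ‖(𝕜 ∙ x).starProjection w‖ ≤ ‖x - y‖ * ‖w‖ := by
  rcases eq_or_ne x 0 with rfl | hx
  · simpa using by positivity
  have inner_eq : ⟪x, w⟫_𝕜 = ⟪(𝕜 ∙ y)ᗮ.starProjection x, w⟫_𝕜 := by
    rw [Submodule.inner_starProjection_left_eq_right, Submodule.starProjection_eq_self_iff.2 hw]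
  refine le_of_mul_le_mul_left ?_ (norm_pos_iff.2 hx)
  calc ‖x‖ * (‖y‖ * ‖(𝕜 ∙ x).starProjection w‖)
      = ‖y‖ * ‖⟪(𝕜 ∙ y)ᗮ.starProjection x, w⟫_𝕜‖ := by
        rw [mul_left_comm, norm_mul_norm_starProjection_span_singleton, inner_eq]
    _ ≤ ‖y‖ * (‖(𝕜 ∙ y)ᗮ.starProjection x‖ * ‖w‖) := by
        gcongr
        exact norm_inner_le_norm _ _
    _ = ‖x‖ * (‖(𝕜 ∙ x)ᗮ.starProjection y‖ * ‖w‖) := by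
        rw [← mul_assoc, norm_mul_norm_starProjection_orthogonal_span_singleton_comm, mul_assoc]
    _ ≤ ‖x‖ * (‖x - y‖ * ‖w‖) := by
        gcongr
        exact norm_starProjection_orthogonal_span_singleton_le x y

theorem norm_mul_norm_starProjection_span_singleton_sub_le (x y z : E) :
    ‖y‖ * ‖(𝕜 ∙ x).starProjection z - (𝕜 ∙ y).starProjection z‖ ≤ ‖x - y‖ * ‖z‖ := by
  have orthogonal_part := norm_mul_norm_starProjection_span_singleton_le_of_mem_orthogonal x
    ((𝕜 ∙ y)ᗮ.starProjection_apply_mem z)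
  have parallel_part := norm_mul_norm_starProjection_orthogonal_span_singleton_le_of_mem x
    ((𝕜 ∙ y).starProjection_apply_mem z)
  refine le_of_sq_le_sq ?_ (by positivity)
  calc (‖y‖ * ‖(𝕜 ∙ x).starProjection z - (𝕜 ∙ y).starProjection z‖) ^ 2
      = (‖y‖ * ‖(𝕜 ∙ x).starProjection ((𝕜 ∙ y)ᗮ.starProjection z)‖) ^ 2 +
          (‖y‖ * ‖(𝕜 ∙ x)ᗮ.starProjection ((𝕜 ∙ y).starProjection z)‖) ^ 2 := by
        rw [mul_pow, norm_sq_starProjection_sub_starProjection]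
        ring
    _ ≤ (‖x - y‖ * ‖(𝕜 ∙ y)ᗮ.starProjection z‖) ^ 2 +
          (‖x - y‖ * ‖(𝕜 ∙ y).starProjection z‖) ^ 2 := by gcongr
    _ = (‖x - y‖ * ‖z‖) ^ 2 := by
        rw [mul_pow _ ‖z‖, Submodule.norm_sq_eq_add_norm_sq_starProjection z (𝕜 ∙ y)]
        ring

theorem lipschitzWith_starProjection_span_singleton_apply {T : E → E} {K : NNReal}
    (hT : LipschitzWith K T) (hT0 : T 0 = 0) :
    LipschitzWith (2 * K) fun x ↦ (𝕜 ∙ x).starProjection (T x) := by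
  refine LipschitzWith.of_dist_le_mul fun x y ↦ ?_
  have norm_T_le : ‖T y‖ ≤ K * ‖y‖ := by simpa [hT0] using hT.norm_sub_le y 0
  have same_line : ‖(𝕜 ∙ x).starProjection (T x - T y)‖ ≤ K * ‖x - y‖ :=
    (Submodule.norm_starProjection_apply_le _ _).trans (hT.norm_sub_le x y)
  have same_vector :
      ‖(𝕜 ∙ x).starProjection (T y) - (𝕜 ∙ y).starProjection (T y)‖ ≤ K * ‖x - y‖ := by
    rcases eq_or_ne y 0 with rfl | hy
    · simpa [hT0] using by positivity
    · refine le_of_mul_le_mul_left ?_ (norm_pos_iff.2 hy)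
      calc _ ≤ ‖x - y‖ * ‖T y‖ := norm_mul_norm_starProjection_span_singleton_sub_le x y (T y)
        _ ≤ ‖x - y‖ * (K * ‖y‖) := by gcongr
        _ = ‖y‖ * (K * ‖x - y‖) := by ring
  rw [dist_eq_norm, dist_eq_norm]
  calc ‖(𝕜 ∙ x).starProjection (T x) - (𝕜 ∙ y).starProjection (T y)‖
      ≤ ‖(𝕜 ∙ x).starProjection (T x - T y)‖ +
          ‖(𝕜 ∙ x).starProjection (T y) - (𝕜 ∙ y).starProjection (T y)‖ := by
        rw [map_sub]
        exact norm_sub_le_norm_sub_add_norm_sub _ _ _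
    _ ≤ K * ‖x - y‖ + K * ‖x - y‖ := add_le_add same_line same_vector
    _ = (2 * K : NNReal) * ‖x - y‖ := by
        push_cast
        ring

theorem lipschitz_state_average_general {T : E → E} {K : NNReal}
    (hT : LipschitzWith K T) (hT0 : T 0 = 0) {f : E → E} (hf0 : f 0 = 0)
    (hf : ∀ ψ : E, ψ ≠ 0 → f ψ = (⟪ψ, T ψ⟫_𝕜 / ⟪ψ, ψ⟫_𝕜) • ψ) :
    LipschitzWith (2 * K) f := by
  have f_eq : f = fun ψ ↦ (𝕜 ∙ ψ).starProjection (T ψ) := by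
    funext ψ
    rcases eq_or_ne ψ 0 with rfl | hψ
    · simp [hf0]
    · rw [hf ψ hψ, Submodule.starProjection_singleton, inner_self_eq_norm_sq_to_K,
        RCLike.ofReal_pow]
  exact f_eq ▸ lipschitzWith_starProjection_span_singleton_apply hT hT0

end Projections

/-- **Lipschitz continuity of the state-average nonlinearity.**
For a bounded operator `M` on a complex Hilbert space `𝓗`, the map
`f(ψ) = (⟪ψ, Mψ⟫ / ⟪ψ, ψ⟫) • ψ` (with `f 0 = 0`) is globally Lipschitz
with constant `5‖M‖`. -/
theorem lipschitz_state_average {H : Type*} [NormedAddCommGroup H]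
    [InnerProductSpace ℂ H] [CompleteSpace H]
    (M : H →L[ℂ] H) (f : H → H) (hf0 : f 0 = 0)
    (hf : ∀ ψ : H, ψ ≠ 0 → f ψ = (⟪ψ, M ψ⟫_ℂ / ⟪ψ, ψ⟫_ℂ) • ψ) :
    ∀ ψ φ : H, ‖f ψ - f φ‖ ≤ 5 * ‖M‖ * ‖ψ - φ‖ := by
  intro ψ φ
  calc ‖f ψ - f φ‖ ≤ 2 * ‖M‖ * ‖ψ - φ‖ :=
        (lipschitz_state_average_general M.lipschitz (map_zero M) hf0 hf).norm_sub_le ψ φ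
    _ ≤ 5 * ‖M‖ * ‖ψ - φ‖ := by gcongr; norm_num
end

section
/- Let M be a bounded linear operator on 𝓗 and define f : 𝓗 → 𝓗 by f(ψ) = (⟨ψ, Mψ⟩ / ⟨ψ, ψ⟩) ψ for ψ ≠ 0 and f(0) = 0. Then at every ψ ≠ 0 the map f is Fréchet differentiable as a map of real Banach spaces (𝓗 regarded as a real Hilbert space by restriction of scalars), and the real-linear Fréchet derivative Df_ψ is a bounded operator with operator norm not exceeding 5‖M‖. -/
open scoped InnerProductSpace

/-!
Put `c = ⟪ψ, M ψ⟫ / ⟪ψ, ψ⟫` and `N = M - c`. The average of `M` in a state `φ` is `c` plus the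
average of `N` in `φ`, and `⟪φ, N φ⟫` vanishes at `φ = ψ`. Hence the derivative of the denominator
`⟪φ, φ⟫` does not contribute, and the average has derivative `(⟪ψ, N h⟫ + ⟪h, N ψ⟫) / ‖ψ‖ ^ 2` at
`ψ`. As `|c| ≤ ‖M‖`, we have `‖N‖ ≤ 2 ‖M‖`, so this is at most `4 ‖M‖ ‖h‖ / ‖ψ‖`. The product rule
for `φ ↦ (average at φ) • φ` adds the term `c • h`, which gives `4 ‖M‖ + ‖M‖`.
-/

theorem hasFDerivAt_div_of_eq_zero {𝕜 𝕜' E : Type*} [NontriviallyNormedField 𝕜] [NormedField 𝕜']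
    [NormedAlgebra 𝕜 𝕜'] [NormedAddCommGroup E] [NormedSpace 𝕜 E] {u v : E → 𝕜'} {u' : E →L[𝕜] 𝕜'}
    {x : E} (hu : HasFDerivAt u u' x) (hux : u x = 0) (hv : DifferentiableAt 𝕜 v x)
    (hvx : v x ≠ 0) : HasFDerivAt (fun y ↦ u y / v y) ((v x)⁻¹ • u') x := by
  simp only [div_eq_mul_inv]
  refine (hu.mul (hv.inv hvx).hasFDerivAt).congr_fderiv ?_
  ext h
  simp [hux]

section StateAverage

variable {𝕜 H : Type*} [RCLike 𝕜] [NormedAddCommGroup H] [InnerProductSpace 𝕜 H]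

/-- The average `⟨M⟩_ψ = ⟪ψ, M ψ⟫ / ⟪ψ, ψ⟫` of the operator `M` in the unnormalized state `ψ`. It is
`𝕜`-valued, as `M` need not be symmetric, and `0` at `ψ = 0` by the convention `x / 0 = 0`. -/
noncomputable def stateAverage (M : H →L[𝕜] H) (ψ : H) : 𝕜 :=
  ⟪ψ, M ψ⟫_𝕜 / ⟪ψ, ψ⟫_𝕜

/-- The fluctuation `M - ⟨M⟩_ψ` of the operator `M` about its average in the state `ψ`. -/
noncomputable def fluctuation (M : H →L[𝕜] H) (ψ : H) : H →L[𝕜] H :=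
  M - stateAverage M ψ • ContinuousLinearMap.id 𝕜 H

theorem norm_inner_apply_le {G : Type*} [SeminormedAddCommGroup G] [NormedSpace 𝕜 G]
    (M : G →L[𝕜] H) (φ : H) (ψ : G) : ‖⟪φ, M ψ⟫_𝕜‖ ≤ ‖M‖ * ‖φ‖ * ‖ψ‖ :=
  calc
    ‖⟪φ, M ψ⟫_𝕜‖ ≤ ‖φ‖ * ‖M ψ‖ := norm_inner_le_norm φ (M ψ)
    _ ≤ ‖φ‖ * (‖M‖ * ‖ψ‖) := by gcongr; exact M.le_opNorm ψ
    _ = ‖M‖ * ‖φ‖ * ‖ψ‖ := by ring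

theorem norm_stateAverage_le (M : H →L[𝕜] H) (ψ : H) : ‖stateAverage M ψ‖ ≤ ‖M‖ := by
  rw [stateAverage, norm_div, ← inner_self_re_eq_norm, inner_self_eq_norm_mul_norm]
  refine div_le_of_le_mul₀ (by positivity) (norm_nonneg M) ?_
  exact (norm_inner_apply_le M ψ ψ).trans_eq (mul_assoc _ _ _)

theorem norm_fluctuation_le (M : H →L[𝕜] H) (ψ : H) : ‖fluctuation M ψ‖ ≤ 2 * ‖M‖ :=
  calc
    ‖fluctuation M ψ‖ ≤ ‖M‖ + ‖stateAverage M ψ • ContinuousLinearMap.id 𝕜 H‖ := norm_sub_le _ _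
    _ ≤ ‖M‖ + ‖M‖ * 1 := by
      rw [norm_smul]
      gcongr
      · exact norm_stateAverage_le M ψ
      · exact ContinuousLinearMap.norm_id_le
    _ = 2 * ‖M‖ := by ring

theorem inner_fluctuation_apply (M : H →L[𝕜] H) (ψ φ χ : H) :
    ⟪φ, fluctuation M ψ χ⟫_𝕜 = ⟪φ, M χ⟫_𝕜 - stateAverage M ψ * ⟪φ, χ⟫_𝕜 := by
  simp [fluctuation, inner_sub_right, inner_smul_right]

theorem inner_fluctuation_self (M : H →L[𝕜] H) {ψ : H} (hψ : ψ ≠ 0) :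
    ⟪ψ, fluctuation M ψ ψ⟫_𝕜 = 0 := by
  rw [inner_fluctuation_apply, stateAverage, div_mul_cancel₀ _ (inner_self_ne_zero.mpr hψ),
    sub_self]

theorem stateAverage_eq_add_stateAverage_fluctuation (M : H →L[𝕜] H) (ψ : H) {φ : H}
    (hφ : φ ≠ 0) : stateAverage M φ = stateAverage M ψ + stateAverage (fluctuation M ψ) φ := by
  have hφφ : ⟪φ, φ⟫_𝕜 ≠ 0 := inner_self_ne_zero.mpr hφ
  rw [stateAverage.eq_def (fluctuation M ψ), inner_fluctuation_apply, sub_div,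
    mul_div_cancel_right₀ _ hφφ, ← stateAverage.eq_def, add_sub_cancel]

variable [NormedSpace ℝ H] [IsScalarTower ℝ 𝕜 H]

/-- The real-linear map `h ↦ ⟪ψ, M h⟫ + ⟪h, M ψ⟫`, the derivative of `φ ↦ ⟪φ, M φ⟫` at `ψ`. -/
noncomputable def innerApplySelfFDeriv (M : H →L[𝕜] H) (ψ : H) : H →L[ℝ] 𝕜 :=
  (fderivInnerCLM 𝕜 (ψ, M ψ)).comp ((ContinuousLinearMap.id ℝ H).prod (M.restrictScalars ℝ))

theorem hasFDerivAt_inner_apply_self (M : H →L[𝕜] H) (ψ : H) :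
    HasFDerivAt (fun φ ↦ ⟪φ, M φ⟫_𝕜) (innerApplySelfFDeriv M ψ) ψ :=
  (hasFDerivAt_id ψ).inner 𝕜 (M.restrictScalars ℝ).hasFDerivAt

theorem norm_innerApplySelfFDeriv_le (M : H →L[𝕜] H) (ψ : H) :
    ‖innerApplySelfFDeriv M ψ‖ ≤ 2 * ‖M‖ * ‖ψ‖ := by
  refine ContinuousLinearMap.opNorm_le_bound _ (by positivity) fun h ↦ ?_
  calc
    ‖⟪ψ, M h⟫_𝕜 + ⟪h, M ψ⟫_𝕜‖ ≤ ‖M‖ * ‖ψ‖ * ‖h‖ + ‖M‖ * ‖h‖ * ‖ψ‖ :=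
      norm_add_le_of_le (norm_inner_apply_le M ψ h) (norm_inner_apply_le M h ψ)
    _ = 2 * ‖M‖ * ‖ψ‖ * ‖h‖ := by ring

/-- The derivative of `stateAverage M` at `ψ ≠ 0`, expressed through the fluctuation of `M` instead
of the two terms of the quotient rule. -/
noncomputable def stateAverageFDeriv (M : H →L[𝕜] H) (ψ : H) : H →L[ℝ] 𝕜 :=
  (⟪ψ, ψ⟫_𝕜)⁻¹ • innerApplySelfFDeriv (fluctuation M ψ) ψ

theorem hasFDerivAt_stateAverage (M : H →L[𝕜] H) {ψ : H} (hψ : ψ ≠ 0) :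
    HasFDerivAt (stateAverage M) (stateAverageFDeriv M ψ) ψ := by
  have hfluctuation :
      HasFDerivAt (stateAverage (fluctuation M ψ)) (stateAverageFDeriv M ψ) ψ :=
    hasFDerivAt_div_of_eq_zero (hasFDerivAt_inner_apply_self (fluctuation M ψ) ψ)
      (inner_fluctuation_self M hψ) (differentiableAt_id.inner 𝕜 differentiableAt_id)
      (inner_self_ne_zero.mpr hψ)
  refine (hfluctuation.const_add (stateAverage M ψ)).congr_of_eventuallyEq ?_
  filter_upwards [isOpen_ne.mem_nhds hψ] with φ hφ
  exact stateAverage_eq_add_stateAverage_fluctuation M ψ hφ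

theorem norm_stateAverageFDeriv_mul_norm_le (M : H →L[𝕜] H) (ψ : H) :
    ‖stateAverageFDeriv M ψ‖ * ‖ψ‖ ≤ 4 * ‖M‖ := by
  rw [stateAverageFDeriv, norm_smul, norm_inv, ← inner_self_re_eq_norm,
    inner_self_eq_norm_mul_norm, mul_assoc, mul_comm, ← div_eq_mul_inv]
  refine div_le_of_le_mul₀ (by positivity) (by positivity) ?_
  calc
    ‖innerApplySelfFDeriv (fluctuation M ψ) ψ‖ * ‖ψ‖
      ≤ 2 * ‖fluctuation M ψ‖ * ‖ψ‖ * ‖ψ‖ := by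
        gcongr
        exact norm_innerApplySelfFDeriv_le (fluctuation M ψ) ψ
    _ ≤ 2 * (2 * ‖M‖) * ‖ψ‖ * ‖ψ‖ := by
        gcongr
        exact norm_fluctuation_le M ψ
    _ = 4 * ‖M‖ * (‖ψ‖ * ‖ψ‖) := by ring

/-- The derivative of `φ ↦ stateAverage M φ • φ` at `ψ ≠ 0`, as given by the product rule. -/
noncomputable def stateAverageSMulFDeriv (M : H →L[𝕜] H) (ψ : H) : H →L[ℝ] H :=
  stateAverage M ψ • ContinuousLinearMap.id ℝ H + (stateAverageFDeriv M ψ).smulRight ψ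

theorem hasFDerivAt_stateAverage_smul (M : H →L[𝕜] H) {ψ : H} (hψ : ψ ≠ 0) :
    HasFDerivAt (fun φ ↦ stateAverage M φ • φ) (stateAverageSMulFDeriv M ψ) ψ :=
  (hasFDerivAt_stateAverage M hψ).smul (hasFDerivAt_id ψ)

theorem norm_stateAverageSMulFDeriv_le (M : H →L[𝕜] H) (ψ : H) :
    ‖stateAverageSMulFDeriv M ψ‖ ≤ 5 * ‖M‖ := by
  refine ContinuousLinearMap.opNorm_le_bound _ (by positivity) fun h ↦ ?_
  calc
    ‖stateAverage M ψ • h + stateAverageFDeriv M ψ h • ψ‖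
      ≤ ‖stateAverage M ψ‖ * ‖h‖ + ‖stateAverageFDeriv M ψ h‖ * ‖ψ‖ :=
        norm_add_le_of_le (norm_smul_le _ _) (norm_smul_le _ _)
    _ ≤ ‖stateAverage M ψ‖ * ‖h‖ + ‖stateAverageFDeriv M ψ‖ * ‖h‖ * ‖ψ‖ := by
        gcongr
        exact (stateAverageFDeriv M ψ).le_opNorm h
    _ = (‖stateAverage M ψ‖ + ‖stateAverageFDeriv M ψ‖ * ‖ψ‖) * ‖h‖ := by ring
    _ ≤ (‖M‖ + 4 * ‖M‖) * ‖h‖ := mul_le_mul_of_nonneg_right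
        (add_le_add (norm_stateAverage_le M ψ) (norm_stateAverageFDeriv_mul_norm_le M ψ))
        (norm_nonneg h)
    _ = 5 * ‖M‖ * ‖h‖ := by ring

theorem hasFDerivAt_state_average_general (M : H →L[𝕜] H) (f : H → H)
    (hf : ∀ ψ : H, ψ ≠ 0 → f ψ = (⟪ψ, M ψ⟫_𝕜 / ⟪ψ, ψ⟫_𝕜) • ψ) (ψ : H) (hψ : ψ ≠ 0) :
    ∃ D : H →L[ℝ] H, HasFDerivAt f D ψ ∧ ‖D‖ ≤ 5 * ‖M‖ := by
  have hf_eventually : f =ᶠ[nhds ψ] fun φ ↦ stateAverage M φ • φ := by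
    filter_upwards [isOpen_ne.mem_nhds hψ] with φ hφ using hf φ hφ
  exact ⟨stateAverageSMulFDeriv M ψ,
    (hasFDerivAt_stateAverage_smul M hψ).congr_of_eventuallyEq hf_eventually,
    norm_stateAverageSMulFDeriv_le M ψ⟩

end StateAverage

/-- **Real Fréchet differentiability of the state-average nonlinearity.**
For a bounded operator `M` on a complex Hilbert space `𝓗`, the map
`f(ψ) = (⟪ψ, Mψ⟫ / ⟪ψ, ψ⟫) • ψ` (with `f 0 = 0`) is, at every `ψ ≠ 0`,
Fréchet differentiable over `ℝ` (viewing `𝓗` as a real Banach space by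
restriction of scalars), with real-linear derivative of operator norm
at most `5‖M‖`. -/
theorem hasFDerivAt_state_average {H : Type*} [NormedAddCommGroup H]
    [InnerProductSpace ℂ H] [CompleteSpace H]
    (M : H →L[ℂ] H) (f : H → H) (hf0 : f 0 = 0)
    (hf : ∀ ψ : H, ψ ≠ 0 → f ψ = (⟪ψ, M ψ⟫_ℂ / ⟪ψ, ψ⟫_ℂ) • ψ)
    (ψ : H) (hψ : ψ ≠ 0) :
    ∃ D : H →L[ℝ] H, HasFDerivAt f D ψ ∧ ‖D‖ ≤ 5 * ‖M‖ :=
  hasFDerivAt_state_average_general M f hf ψ hψ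
end

section
/- Let ε, η ∈ ℓ²(ℕ; 𝓗) and let γ_ε = ∑_k ε_k ⊗ ε̄_k and γ_η = ∑_k η_k ⊗ η̄_k. Then ‖γ_ε − γ_η‖₂ ≤ ‖ε − η‖ (‖ε‖ + ‖η‖). -/
open scoped InnerProductSpace

/-- The rank-one operator `x ⊗ ȳ : z ↦ ⟪y, z⟫ x` on a complex Hilbert space. -/
noncomputable def rankOne {H : Type*} [NormedAddCommGroup H] [InnerProductSpace ℂ H]
    (x y : H) : H →L[ℂ] H :=
  (innerSL ℂ y).smulRight x

/-- The Hilbert–Schmidt norm `‖T‖₂ = (∑ᵢ ‖T eᵢ‖²)^{1/2}` of an operator `T`,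
computed with respect to a Hilbert basis `e`. -/
noncomputable def hsNorm {H : Type*} [NormedAddCommGroup H] [InnerProductSpace ℂ H]
    {ι : Type*} (e : HilbertBasis ι ℂ H) (T : H →L[ℂ] H) : ℝ :=
  Real.sqrt (∑' i, ‖T (e i)‖ ^ 2)

/-!
Since `x ⊗ x̄ - y ⊗ ȳ = (x - y) ⊗ x̄ + y ⊗ (x - y)‾` and `‖x ⊗ ȳ‖₂ = ‖x‖ ‖y‖`, the `k`-th term of
`γ_ε - γ_η` has Hilbert–Schmidt norm at most `‖ε_k - η_k‖ (‖ε_k‖ + ‖η_k‖)`; summing over `k` with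
Cauchy–Schwarz gives the bound. The sum may be estimated termwise because `T ↦ (T eᵢ)ᵢ` identifies
the Hilbert–Schmidt norm with the norm of `ℓ²(ι; H)`, which is lower semicontinuous under pointwise
convergence.
-/

open Filter
open scoped Topology

theorem hasSum_sq_norm_inner {𝕜 E ι : Type*} [RCLike 𝕜] [NormedAddCommGroup E]
    [InnerProductSpace 𝕜 E] (b : HilbertBasis ι 𝕜 E) (x : E) :
    HasSum (fun i => ‖⟪b i, x⟫_𝕜‖ ^ 2) (‖x‖ ^ 2) := by
  simpa [b.repr_apply_apply] using lp.hasSum_norm (by norm_num) (b.repr x)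

section HilbertSchmidt

variable {H : Type*} [NormedAddCommGroup H] [InnerProductSpace ℂ H] {ι κ : Type*}
  (e : HilbertBasis ι ℂ H) {S T : H →L[ℂ] H}

/-- `T` is a Hilbert–Schmidt operator: `∑ᵢ ‖T eᵢ‖² < ∞`. For operators without this property
`hsNorm e T` has the junk value `0`, so a bound on `hsNorm e T` is only meaningful together with
it. -/
def IsHilbertSchmidt (T : H →L[ℂ] H) : Prop :=
  Memℓp (fun i => T (e i)) 2

variable {e}

namespace IsHilbertSchmidt

/-- The family `(T eᵢ)ᵢ` of a Hilbert–Schmidt operator, as an element of `ℓ²(ι; H)`. It transfers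
norm estimates in `ℓ²(ι; H)` to the Hilbert–Schmidt norm. -/
noncomputable def toLp (hT : IsHilbertSchmidt e T) : lp (fun _ : ι => H) 2 :=
  ⟨fun i => T (e i), hT⟩

theorem norm_toLp (hT : IsHilbertSchmidt e T) : ‖hT.toLp‖ = hsNorm e T := by
  rw [lp.norm_eq_tsum_rpow (by norm_num), hsNorm, Real.sqrt_eq_rpow]
  simp [toLp]

theorem add (hS : IsHilbertSchmidt e S) (hT : IsHilbertSchmidt e T) :
    IsHilbertSchmidt e (S + T) :=
  Memℓp.add hS hT

theorem hsNorm_add_le (hS : IsHilbertSchmidt e S) (hT : IsHilbertSchmidt e T) :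
    hsNorm e (S + T) ≤ hsNorm e S + hsNorm e T := by
  rw [← hS.norm_toLp, ← hT.norm_toLp, ← (hS.add hT).norm_toLp]
  exact norm_add_le hS.toLp hT.toLp

end IsHilbertSchmidt

theorem isHilbertSchmidt_and_hsNorm_le_of_hasSum {S : κ → H →L[ℂ] H} {b : κ → ℝ} {B : ℝ}
    (hS : ∀ k, IsHilbertSchmidt e (S k)) (hSb : ∀ k, hsNorm e (S k) ≤ b k) (hb : HasSum b B)
    (hT : ∀ i, HasSum (fun k => S k (e i)) (T (e i))) :
    IsHilbertSchmidt e T ∧ hsNorm e T ≤ B := by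
  let partialSum (s : Finset κ) : lp (fun _ : ι => H) 2 := ∑ k ∈ s, (hS k).toLp
  have norm_partialSum_le (s : Finset κ) : ‖partialSum s‖ ≤ B :=
    calc ‖partialSum s‖ ≤ ∑ k ∈ s, ‖(hS k).toLp‖ := norm_sum_le _ _
      _ ≤ ∑ k ∈ s, b k := Finset.sum_le_sum fun k _ => (hS k).norm_toLp.trans_le (hSb k)
      _ ≤ B := sum_le_hasSum s (fun k _ => (Real.sqrt_nonneg _).trans (hSb k)) hb
  have tendsto_partialSum :
      Tendsto (fun s => (partialSum s : ι → H)) atTop (𝓝 fun i => T (e i)) := by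
    refine tendsto_pi_nhds.2 fun i => (hT i).congr fun s => ?_
    rw [lp.coeFn_sum]
    exact (Finset.sum_apply i s fun k i => S k (e i)).symm
  have hT_mem : IsHilbertSchmidt e T :=
    lp.memℓp_of_tendsto (isBounded_iff_forall_norm_le.2
      ⟨B, Set.forall_mem_range.2 norm_partialSum_le⟩) tendsto_partialSum
  refine ⟨hT_mem, hT_mem.norm_toLp ▸ ?_⟩
  exact lp.norm_le_of_tendsto (.of_forall norm_partialSum_le) tendsto_partialSum

section RankOne

theorem rankOne_apply (x y z : H) : rankOne x y z = ⟪y, z⟫_ℂ • x := rfl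

theorem rankOne_self_sub_rankOne_self (x y : H) :
    rankOne x x - rankOne y y = rankOne (x - y) x + rankOne y (x - y) := by
  ext z
  simp only [sub_apply, add_apply, rankOne_apply, inner_sub_left, smul_sub, sub_smul]
  abel

variable (e)

theorem hasSum_sq_norm_rankOne_apply (x y : H) :
    HasSum (fun i => ‖rankOne x y (e i)‖ ^ 2) ((‖x‖ * ‖y‖) ^ 2) := by
  simpa only [rankOne_apply, norm_smul, norm_inner_symm y, mul_pow, mul_comm]
    using (hasSum_sq_norm_inner e y).mul_left (‖x‖ ^ 2)

theorem isHilbertSchmidt_rankOne (x y : H) : IsHilbertSchmidt e (rankOne x y) :=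
  memℓp_gen (by simpa using (hasSum_sq_norm_rankOne_apply e x y).summable)

theorem hsNorm_rankOne (x y : H) : hsNorm e (rankOne x y) = ‖x‖ * ‖y‖ := by
  rw [hsNorm, (hasSum_sq_norm_rankOne_apply e x y).tsum_eq, Real.sqrt_sq (by positivity)]

theorem isHilbertSchmidt_rankOne_self_sub_rankOne_self (x y : H) :
    IsHilbertSchmidt e (rankOne x x - rankOne y y) := by
  rw [rankOne_self_sub_rankOne_self]
  exact (isHilbertSchmidt_rankOne e _ _).add (isHilbertSchmidt_rankOne e _ _)

theorem hsNorm_rankOne_self_sub_rankOne_self_le (x y : H) :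
    hsNorm e (rankOne x x - rankOne y y) ≤ ‖x - y‖ * ‖x‖ + ‖x - y‖ * ‖y‖ :=
  calc hsNorm e (rankOne x x - rankOne y y)
      = hsNorm e (rankOne (x - y) x + rankOne y (x - y)) := by rw [rankOne_self_sub_rankOne_self]
    _ ≤ hsNorm e (rankOne (x - y) x) + hsNorm e (rankOne y (x - y)) :=
      (isHilbertSchmidt_rankOne e _ _).hsNorm_add_le (isHilbertSchmidt_rankOne e _ _)
    _ = ‖x - y‖ * ‖x‖ + ‖x - y‖ * ‖y‖ := by rw [hsNorm_rankOne, hsNorm_rankOne, mul_comm ‖y‖]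

end RankOne

theorem hsNorm_density_diff_le_general (e : HilbertBasis ι ℂ H) (ε η : lp (fun _ : κ => H) 2)
    (γε γη : H →L[ℂ] H) (hγε : HasSum (fun k => rankOne (ε k) (ε k)) γε)
    (hγη : HasSum (fun k => rankOne (η k) (η k)) γη) :
    IsHilbertSchmidt e (γε - γη) ∧ hsNorm e (γε - γη) ≤ ‖ε - η‖ * (‖ε‖ + ‖η‖) := by
  have two_conj : (2 : ENNReal).toReal.HolderConjugate (2 : ENNReal).toReal := by
    simpa using Real.HolderConjugate.two_two
  obtain ⟨summable_ε, tsum_ε_le⟩ := lp.tsum_mul_le_mul_norm two_conj (ε - η) ε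
  obtain ⟨summable_η, tsum_η_le⟩ := lp.tsum_mul_le_mul_norm two_conj (ε - η) η
  have hasSum_apply (z : H) :
      HasSum (fun k => (rankOne (ε k) (ε k) - rankOne (η k) (η k)) z) ((γε - γη) z) :=
    (ContinuousLinearMap.apply ℂ H z).hasSum (hγε.sub hγη)
  obtain ⟨hγ, hsNorm_le⟩ := isHilbertSchmidt_and_hsNorm_le_of_hasSum
    (fun k => isHilbertSchmidt_rankOne_self_sub_rankOne_self e (ε k) (η k))
    (fun k => hsNorm_rankOne_self_sub_rankOne_self_le e (ε k) (η k))
    (summable_ε.hasSum.add summable_η.hasSum) (fun i => hasSum_apply (e i))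
  refine ⟨hγ, hsNorm_le.trans ?_⟩
  rw [mul_add]
  exact add_le_add tsum_ε_le tsum_η_le

end HilbertSchmidt

/-- **Hilbert–Schmidt estimate for differences of density operators.**
For `ε, η ∈ ℓ²(ℕ; 𝓗)` and the operators `γ_ε = ∑_k ε_k ⊗ ε̄_k`,
`γ_η = ∑_k η_k ⊗ η̄_k`, one has `‖γ_ε − γ_η‖₂ ≤ ‖ε − η‖ (‖ε‖ + ‖η‖)`. -/
theorem hsNorm_density_diff_le {H : Type*} [NormedAddCommGroup H]
    [InnerProductSpace ℂ H] [CompleteSpace H] {ι : Type*} (e : HilbertBasis ι ℂ H)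
    (ε η : lp (fun _ : ℕ => H) 2) (γε γη : H →L[ℂ] H)
    (hγε : HasSum (fun k => rankOne (ε k) (ε k)) γε)
    (hγη : HasSum (fun k => rankOne (η k) (η k)) γη) :
    hsNorm e (γε - γη) ≤ ‖ε - η‖ * (‖ε‖ + ‖η‖) :=
  (hsNorm_density_diff_le_general e ε η γε γη hγε hγη).2
end

section
/- Let L be a bounded linear operator on 𝓗 and define G : 𝓗 → 𝓗 by G(ψ) = (⟨ψ, (L + L*)ψ⟩ / ⟨ψ, ψ⟩) Lψ for ψ ≠ 0 and G(0) = 0. Then G is globally Lipschitz with Lipschitz constant 10‖L‖², i.e. ‖G(ψ) − G(φ)‖ ≤ 10‖L‖² ‖ψ − φ‖ for all ψ, φ ∈ 𝓗. -/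
open scoped InnerProductSpace

/-!
The expectation value `⟨M⟩_ψ` is the scalar `m` with `⟪ψ, (M - m) ψ⟫ = 0`, and `|m| ≤ ‖M‖`.
Comparing the quadratic form of the centred operator `M - m`, whose norm is at most `2 ‖M‖`, at `φ`
and at `ψ` bounds `|⟨M⟩_φ - ⟨M⟩_ψ| ‖φ‖²` by `2 ‖M‖ (‖φ‖ + ‖ψ‖) ‖φ - ψ‖`. Taking `φ` to be the longer
vector, `|⟨M⟩_φ - ⟨M⟩_ψ| max ‖φ‖ ‖ψ‖ ≤ 4 ‖M‖ ‖φ - ψ‖`, which exactly compensates the growth of `L φ`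
in `⟨M⟩_ψ L ψ - ⟨M⟩_φ L φ = ⟨M⟩_ψ L (ψ - φ) + (⟨M⟩_ψ - ⟨M⟩_φ) L φ`.
-/

section ExpectationValue

variable {𝕜 E F : Type*} [RCLike 𝕜] [NormedAddCommGroup E] [InnerProductSpace 𝕜 E]
  [NormedAddCommGroup F] [NormedSpace 𝕜 F]

/-- The expectation value `⟨M⟩_ψ` of a bounded operator `M` in the unnormalized state `ψ`. It is
`𝕜`-valued because `M` need not be self-adjoint, and division by zero makes it `0` at `ψ = 0`. -/
noncomputable def expectationValue (M : E →L[𝕜] E) (ψ : E) : 𝕜 :=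
  ⟪ψ, M ψ⟫_𝕜 / ⟪ψ, ψ⟫_𝕜

theorem expectationValue_mul_inner_self (M : E →L[𝕜] E) (ψ : E) :
    expectationValue M ψ * ⟪ψ, ψ⟫_𝕜 = ⟪ψ, M ψ⟫_𝕜 :=
  div_mul_cancel_of_imp fun h => by rw [inner_self_eq_zero.mp h, inner_zero_left]

theorem norm_expectationValue_le (M : E →L[𝕜] E) (ψ : E) : ‖expectationValue M ψ‖ ≤ ‖M‖ := by
  rw [expectationValue, norm_div, ← inner_self_re_eq_norm, inner_self_eq_norm_mul_norm]
  refine div_le_of_le_mul₀ (by positivity) (norm_nonneg M) ?_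
  calc ‖⟪ψ, M ψ⟫_𝕜‖ ≤ ‖ψ‖ * ‖M ψ‖ := norm_inner_le_norm ψ (M ψ)
    _ ≤ ‖ψ‖ * (‖M‖ * ‖ψ‖) := by gcongr; exact M.le_opNorm ψ
    _ = ‖M‖ * (‖ψ‖ * ‖ψ‖) := by ring

theorem norm_inner_map_self_sub_le (N : E →L[𝕜] E) (φ ψ : E) :
    ‖⟪φ, N φ⟫_𝕜 - ⟪ψ, N ψ⟫_𝕜‖ ≤ ‖N‖ * (‖φ‖ + ‖ψ‖) * ‖φ - ψ‖ :=
  calc ‖⟪φ, N φ⟫_𝕜 - ⟪ψ, N ψ⟫_𝕜‖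
      = ‖⟪φ - ψ, N φ⟫_𝕜 + ⟪ψ, N (φ - ψ)⟫_𝕜‖ := by
        rw [map_sub, inner_sub_left, inner_sub_right, sub_add_sub_cancel]
    _ ≤ ‖φ - ψ‖ * ‖N φ‖ + ‖ψ‖ * ‖N (φ - ψ)‖ :=
        norm_add_le_of_le (norm_inner_le_norm _ _) (norm_inner_le_norm _ _)
    _ ≤ ‖φ - ψ‖ * (‖N‖ * ‖φ‖) + ‖ψ‖ * (‖N‖ * ‖φ - ψ‖) := by
        gcongr <;> exact N.le_opNorm _
    _ = ‖N‖ * (‖φ‖ + ‖ψ‖) * ‖φ - ψ‖ := by ring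

theorem norm_sub_expectationValue_smul_id_le (M : E →L[𝕜] E) (ψ : E) :
    ‖M - expectationValue M ψ • ContinuousLinearMap.id 𝕜 E‖ ≤ 2 * ‖M‖ :=
  calc ‖M - expectationValue M ψ • ContinuousLinearMap.id 𝕜 E‖
      ≤ ‖M‖ + ‖expectationValue M ψ‖ * ‖ContinuousLinearMap.id 𝕜 E‖ :=
        (norm_sub_le _ _).trans_eq (by rw [norm_smul])
    _ ≤ ‖M‖ + ‖M‖ * 1 := by
        gcongr
        · exact norm_expectationValue_le M ψ
        · exact ContinuousLinearMap.norm_id_le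
    _ = 2 * ‖M‖ := by ring

theorem inner_sub_expectationValue_smul_id (M : E →L[𝕜] E) (φ ψ : E) :
    ⟪φ, (M - expectationValue M ψ • ContinuousLinearMap.id 𝕜 E) φ⟫_𝕜 =
      (expectationValue M φ - expectationValue M ψ) * ⟪φ, φ⟫_𝕜 := by
  rw [sub_mul, expectationValue_mul_inner_self, sub_apply, smul_apply,
    ContinuousLinearMap.id_apply, inner_sub_right, inner_smul_right]

theorem norm_expectationValue_sub_mul_sq_le (M : E →L[𝕜] E) (φ ψ : E) :
    ‖expectationValue M φ - expectationValue M ψ‖ * ‖φ‖ ^ 2 ≤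
      2 * ‖M‖ * (‖φ‖ + ‖ψ‖) * ‖φ - ψ‖ := by
  set N := M - expectationValue M ψ • ContinuousLinearMap.id 𝕜 E
  have inner_ψ : ⟪ψ, N ψ⟫_𝕜 = 0 := by
    rw [inner_sub_expectationValue_smul_id, sub_self, zero_mul]
  calc ‖expectationValue M φ - expectationValue M ψ‖ * ‖φ‖ ^ 2
      = ‖⟪φ, N φ⟫_𝕜 - ⟪ψ, N ψ⟫_𝕜‖ := by
        rw [inner_ψ, sub_zero, inner_sub_expectationValue_smul_id, norm_mul,
          ← inner_self_re_eq_norm, inner_self_eq_norm_sq]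
    _ ≤ ‖N‖ * (‖φ‖ + ‖ψ‖) * ‖φ - ψ‖ := norm_inner_map_self_sub_le N φ ψ
    _ ≤ 2 * ‖M‖ * (‖φ‖ + ‖ψ‖) * ‖φ - ψ‖ := by
        gcongr
        exact norm_sub_expectationValue_smul_id_le M ψ

theorem norm_expectationValue_sub_mul_max_le (M : E →L[𝕜] E) (φ ψ : E) :
    ‖expectationValue M φ - expectationValue M ψ‖ * max ‖φ‖ ‖ψ‖ ≤ 4 * ‖M‖ * ‖φ - ψ‖ := by
  wlog hle : ‖ψ‖ ≤ ‖φ‖ generalizing φ ψ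
  · rw [norm_sub_rev, max_comm, norm_sub_rev φ]
    exact this ψ φ (le_of_not_ge hle)
  rw [max_eq_left hle]
  rcases (norm_nonneg φ).eq_or_lt with hφ | hφ
  · rw [← hφ, mul_zero]
    positivity
  refine le_of_mul_le_mul_right ?_ hφ
  calc ‖expectationValue M φ - expectationValue M ψ‖ * ‖φ‖ * ‖φ‖
      = ‖expectationValue M φ - expectationValue M ψ‖ * ‖φ‖ ^ 2 := by ring
    _ ≤ 2 * ‖M‖ * (‖φ‖ + ‖ψ‖) * ‖φ - ψ‖ := norm_expectationValue_sub_mul_sq_le M φ ψ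
    _ ≤ 2 * ‖M‖ * (‖φ‖ + ‖φ‖) * ‖φ - ψ‖ := by gcongr
    _ = 4 * ‖M‖ * ‖φ - ψ‖ * ‖φ‖ := by ring

theorem norm_expectationValue_smul_sub_le (M : E →L[𝕜] E) (L : E →L[𝕜] F) (ψ φ : E) :
    ‖expectationValue M ψ • L ψ - expectationValue M φ • L φ‖ ≤
      5 * ‖M‖ * ‖L‖ * ‖ψ - φ‖ := by
  have norm_sub_mul_le :
      ‖expectationValue M ψ - expectationValue M φ‖ * ‖φ‖ ≤ 4 * ‖M‖ * ‖ψ - φ‖ :=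
    (mul_le_mul_of_nonneg_left (le_max_right _ _) (norm_nonneg _)).trans
      (norm_expectationValue_sub_mul_max_le M ψ φ)
  calc ‖expectationValue M ψ • L ψ - expectationValue M φ • L φ‖
      = ‖expectationValue M ψ • L (ψ - φ) +
          (expectationValue M ψ - expectationValue M φ) • L φ‖ := by
        rw [map_sub, smul_sub, sub_smul, sub_add_sub_cancel]
    _ ≤ ‖expectationValue M ψ‖ * ‖L (ψ - φ)‖ +
          ‖expectationValue M ψ - expectationValue M φ‖ * ‖L φ‖ :=
        norm_add_le_of_le (norm_smul_le _ _) (norm_smul_le _ _)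
    _ ≤ ‖M‖ * (‖L‖ * ‖ψ - φ‖) +
          ‖expectationValue M ψ - expectationValue M φ‖ * (‖L‖ * ‖φ‖) := by
        gcongr
        · exact norm_expectationValue_le M ψ
        · exact L.le_opNorm _
        · exact L.le_opNorm _
    _ = ‖M‖ * ‖L‖ * ‖ψ - φ‖ +
          ‖L‖ * (‖expectationValue M ψ - expectationValue M φ‖ * ‖φ‖) := by ring
    _ ≤ ‖M‖ * ‖L‖ * ‖ψ - φ‖ + ‖L‖ * (4 * ‖M‖ * ‖ψ - φ‖) := by gcongr
    _ = 5 * ‖M‖ * ‖L‖ * ‖ψ - φ‖ := by ring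

theorem lipschitz_filtering_drift_general (M : E →L[𝕜] E) (L : E →L[𝕜] F) (G : E → F)
    (hG0 : G 0 = 0) (hG : ∀ ψ : E, ψ ≠ 0 → G ψ = (⟪ψ, M ψ⟫_𝕜 / ⟪ψ, ψ⟫_𝕜) • L ψ) (ψ φ : E) :
    ‖G ψ - G φ‖ ≤ 5 * ‖M‖ * ‖L‖ * ‖ψ - φ‖ := by
  have G_eq (χ : E) : G χ = expectationValue M χ • L χ := by
    rcases eq_or_ne χ 0 with rfl | hχ
    · rw [hG0, map_zero, smul_zero]
    · exact hG χ hχ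
  rw [G_eq ψ, G_eq φ]
  exact norm_expectationValue_smul_sub_le M L ψ φ

theorem norm_add_adjoint_le [CompleteSpace E] (L : E →L[𝕜] E) :
    ‖L + L.adjoint‖ ≤ 2 * ‖L‖ :=
  (norm_add_le L L.adjoint).trans_eq <| by rw [LinearIsometryEquiv.norm_map, two_mul]

end ExpectationValue

/-- **Lipschitz continuity of the filtering drift nonlinearity.**
For a bounded operator `L` on a complex Hilbert space `𝓗`, the map
`G(ψ) = (⟪ψ, (L + L*)ψ⟫ / ⟪ψ, ψ⟫) • Lψ` (with `G 0 = 0`) is globally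
Lipschitz with constant `10‖L‖²`. -/
theorem lipschitz_filtering_drift {H : Type*} [NormedAddCommGroup H]
    [InnerProductSpace ℂ H] [CompleteSpace H]
    (L : H →L[ℂ] H) (G : H → H) (hG0 : G 0 = 0)
    (hG : ∀ ψ : H, ψ ≠ 0 →
      G ψ = (⟪ψ, (L + L.adjoint) ψ⟫_ℂ / ⟪ψ, ψ⟫_ℂ) • (L ψ)) :
    ∀ ψ φ : H, ‖G ψ - G φ‖ ≤ 10 * ‖L‖ ^ 2 * ‖ψ - φ‖ := fun ψ φ =>
  calc ‖G ψ - G φ‖ ≤ 5 * ‖L + L.adjoint‖ * ‖L‖ * ‖ψ - φ‖ :=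
        lipschitz_filtering_drift_general (L + L.adjoint) L G hG0 hG ψ φ
    _ ≤ 5 * (2 * ‖L‖) * ‖L‖ * ‖ψ - φ‖ := by gcongr; exact norm_add_adjoint_le L
    _ = 10 * ‖L‖ ^ 2 * ‖ψ - φ‖ := by ring
end
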